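/- Let X be a nonempty metric space and μ a Borel probability measure on X. Let (a_n)_{n∈ℕ} be positive real numbers with ∑_n a_n = 1, and for each n let (b_{n,k})_{k∈ℕ} be nonnegative real numbers with ∑_k b_{n,k} ≤ 1 and let x_{n,k} ∈ X be points. If ∑_{n,k} a_n b_{n,k} δ_{x_{n,k}} ≤ μ (as measures), then there exist Borel probability measures μ_n on X, n ∈ ℕ, such that ∑_k b_{n,k} δ_{x_{n,k}} ≤ μ_n for every n and ∑_n a_n μ_n = μ. -/

import Mathlib

open MeasureTheory

/-! What the combination `∑ᵢ cᵢ νᵢ` misses of `μ` is a finite measure whose mass is exactly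
`∑ᵢ cᵢ dᵢ`, where `dᵢ` is the mass missing from `νᵢ`. Normalizing it to a probability measure `κ`,
the measures `νᵢ + dᵢ κ` have the prescribed masses and combine to `μ`. -/

lemma summable_of_tsum_ofReal_ne_top {ι : Type*} {f : ι → ℝ} (hf : ∀ i, 0 ≤ f i)
    (h : ∑' i, ENNReal.ofReal (f i) ≠ ⊤) : Summable f := by
  simpa only [ENNReal.toReal_ofReal (hf _)] using ENNReal.summable_toReal h

section

variable {X ι : Type*} [MeasurableSpace X]

lemma smul_measure_sum (r : ENNReal) (ν : ι → Measure X) :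
    r • Measure.sum ν = Measure.sum fun i => r • ν i := by
  ext s hs
  simp [Measure.sum_apply _ hs, ENNReal.tsum_mul_left]

lemma measure_sum_smul_const (c : ι → ENNReal) (κ : Measure X) :
    Measure.sum (fun i => c i • κ) = (∑' i, c i) • κ := by
  ext s hs
  simp [Measure.sum_apply _ hs, ENNReal.tsum_mul_right]

lemma measure_univ_ne_top_of_sum_smul_le {μ : Measure X} [IsFiniteMeasure μ] {c : ι → ENNReal}
    {ν : ι → Measure X} (hle : Measure.sum (fun i => c i • ν i) ≤ μ) {i : ι} (hc : c i ≠ 0) :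
    ν i Set.univ ≠ ⊤ := by
  intro htop
  have hi : c i • ν i ≤ μ := (Measure.le_sum (fun i => c i • ν i) i).trans hle
  have hfin : c i * ν i Set.univ ≠ ⊤ := ne_top_of_le_ne_top (measure_ne_top μ _) (hi Set.univ)
  exact hfin (by rw [htop, ENNReal.mul_top hc])

lemma exists_isProbabilityMeasure_univ_smul_eq [Nonempty X] (ρ : Measure X) [IsFiniteMeasure ρ] :
    ∃ κ : Measure X, IsProbabilityMeasure κ ∧ ρ Set.univ • κ = ρ := by
  let ρ' : FiniteMeasure X := ⟨ρ, inferInstance⟩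
  refine ⟨ρ'.normalize, inferInstance, ?_⟩
  calc ρ Set.univ • (ρ'.normalize : Measure X)
      = ρ'.mass • (ρ'.normalize : Measure X) := by
        rw [ENNReal.smul_def, ρ'.ennreal_mass, FiniteMeasure.toMeasure_mk]
    _ = ρ := congrArg FiniteMeasure.toMeasure ρ'.self_eq_mass_smul_normalize.symm

lemma exists_ge_measure_univ_eq_sum_smul_eq [Nonempty X] {μ : Measure X} [IsFiniteMeasure μ]
    {c m : ι → ENNReal} {ν : ι → Measure X} (hν : ∀ i, ν i Set.univ ≤ m i)
    (hm : ∑' i, c i * m i = μ Set.univ) (hle : Measure.sum (fun i => c i • ν i) ≤ μ) :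
    ∃ μs : ι → Measure X, (∀ i, μs i Set.univ = m i) ∧ (∀ i, ν i ≤ μs i) ∧
      Measure.sum (fun i => c i • μs i) = μ := by
  let σ : Measure X := Measure.sum fun i => c i • ν i
  let d : ι → ENNReal := fun i => m i - ν i Set.univ
  have hσ : σ Set.univ = ∑' i, c i * ν i Set.univ := by simp [σ]
  have hd (i : ι) : ν i Set.univ + d i = m i := add_tsub_cancel_of_le (hν i)
  have : IsFiniteMeasure σ := isFiniteMeasure_of_le μ hle
  have hdefect : ∑' i, c i * d i = (μ - σ) Set.univ := by
    rw [Measure.sub_apply MeasurableSet.univ hle]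
    refine ENNReal.eq_sub_of_add_eq' (measure_ne_top μ _) ?_
    rw [add_comm, hσ, ← ENNReal.tsum_add, ← hm]
    simp only [← mul_add, hd]
  obtain ⟨κ, hκ, hκμ⟩ := exists_isProbabilityMeasure_univ_smul_eq (μ - σ)
  refine ⟨fun i => ν i + d i • κ, fun i => ?_, fun i => Measure.le_add_right le_rfl, ?_⟩
  · simp [hd]
  · calc Measure.sum (fun i => c i • (ν i + d i • κ))
        = σ + Measure.sum (fun i => (c i * d i) • κ) := by
          simp only [σ, smul_add, smul_smul, Measure.sum_add_sum]
      _ = σ + (μ - σ) := by rw [measure_sum_smul_const, hdefect, hκμ]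
      _ = μ := by rw [add_comm, Measure.sub_add_cancel_of_le hle]

end

theorem exists_decomposition_of_atoms_le_general {X ι ι' : Type*} [MeasurableSpace X]
    (μ : Measure X) [IsProbabilityMeasure μ]
    (a : ι → ℝ) (ha : ∀ i, 0 < a i) (hasum : ∑' i, a i = 1)
    (b : ι → ι' → ℝ) (hb : ∀ i k, 0 ≤ b i k) (hbsum : ∀ i, ∑' k, b i k ≤ 1)
    (π : ι → ι' → Measure X) [∀ i k, IsProbabilityMeasure (π i k)]
    (hle : Measure.sum
        (fun p : ι × ι' => ENNReal.ofReal (a p.1 * b p.1 p.2) • π p.1 p.2) ≤ μ) :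
    ∃ μs : ι → Measure X,
      (∀ i, IsProbabilityMeasure (μs i)) ∧
      (∀ i, Measure.sum (fun k => ENNReal.ofReal (b i k) • π i k) ≤ μs i) ∧
      Measure.sum (fun i => ENNReal.ofReal (a i) • μs i) = μ := by
  have : Nonempty X := nonempty_of_isProbabilityMeasure μ
  let ν : ι → Measure X := fun i => Measure.sum fun k => ENNReal.ofReal (b i k) • π i k
  have hνle : Measure.sum (fun i => ENNReal.ofReal (a i) • ν i) ≤ μ := by
    simpa only [ν, smul_measure_sum, smul_smul, ← ENNReal.ofReal_mul (ha _).le,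
      Measure.sum_sum] using hle
  have hνmass (i : ι) : ν i Set.univ = ∑' k, ENNReal.ofReal (b i k) := by
    simp [ν]
  have hν (i : ι) : ν i Set.univ ≤ 1 := by
    -- A divergent `b i` would have `tsum` equal to `0`; domination by `μ` excludes this.
    have hbi : Summable (b i) := summable_of_tsum_ofReal_ne_top (hb i) <|
      hνmass i ▸ measure_univ_ne_top_of_sum_smul_le hνle (ENNReal.ofReal_pos.2 (ha i)).ne'
    rw [hνmass, ← ENNReal.ofReal_tsum_of_nonneg (hb i) hbi]
    exact ENNReal.ofReal_le_one.2 (hbsum i)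
  have hac : ∑' i, ENNReal.ofReal (a i) * 1 = μ Set.univ := by
    have has : Summable a :=
      not_imp_comm.1 tsum_eq_zero_of_not_summable (hasum ▸ one_ne_zero)
    simp [← ENNReal.ofReal_tsum_of_nonneg (fun i => (ha i).le) has, hasum]
  obtain ⟨μs, hμs, hνμs, hsum⟩ := exists_ge_measure_univ_eq_sum_smul_eq hν hac hνle
  exact ⟨μs, fun i => ⟨hμs i⟩, hνμs, hsum⟩

/-- If `∑_{n,k} aₙ bₙₖ δ_{xₙₖ} ≤ μ` where `aₙ > 0` sum to `1` and, for each `n`,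
`bₙₖ ≥ 0` with `∑ₖ bₙₖ ≤ 1`, then there are Borel probability measures `μₙ` with
`∑ₖ bₙₖ δ_{xₙₖ} ≤ μₙ` for every `n` and `∑ₙ aₙ μₙ = μ`. -/
theorem exists_decomposition_of_atoms_le {X : Type*} [MetricSpace X] [Nonempty X]
    [MeasurableSpace X] [BorelSpace X]
    (μ : Measure X) [IsProbabilityMeasure μ]
    (a : ℕ → ℝ) (ha : ∀ n, 0 < a n) (hasum : ∑' n, a n = 1)
    (b : ℕ → ℕ → ℝ) (hb : ∀ n k, 0 ≤ b n k) (hbsum : ∀ n, ∑' k, b n k ≤ 1)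
    (x : ℕ → ℕ → X)
    (hle : Measure.sum
        (fun p : ℕ × ℕ => ENNReal.ofReal (a p.1 * b p.1 p.2) • Measure.dirac (x p.1 p.2))
      ≤ μ) :
    ∃ μs : ℕ → Measure X,
      (∀ n, IsProbabilityMeasure (μs n)) ∧
      (∀ n, Measure.sum (fun k => ENNReal.ofReal (b n k) • Measure.dirac (x n k)) ≤ μs n) ∧
      Measure.sum (fun n => ENNReal.ofReal (a n) • μs n) = μ :=
  exists_decomposition_of_atoms_le_general μ a ha hasum b hb hbsum
    (fun n k => Measure.dirac (x n k)) hle
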